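/- Suppose the position tracking error q̃ : ℝ → (Fin n → ℝ) is differentiable and satisfies q̃′(t) = −q̃(t) − (1/2) M(t)⁻¹ M′(t) q̃(t) for all t. Then the function V₁(t) = (1/2) q̃(t)ᵀ M(t) q̃(t) satisfies the scalar differential equation V₁′(t) = −2 V₁(t) for all t, and consequently V₁(t) = V₁(0) · exp(−2t) for all t ≥ 0. -/

import Mathlib

open Matrix

/-!
Multiplying the closed-loop equation by `M` turns it into `M q̃′ = -M q̃ - (1/2) M′ q̃`. Since `M`
is symmetric, the derivative of `q̃ᵀ M q̃` is `q̃ᵀ M′ q̃ + 2 q̃ᵀ M q̃′`; on substituting, the terms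
in `M′` cancel and `-2 q̃ᵀ M q̃` remains. The linear equation `V₁′ = -2 V₁` then integrates to an
exponential, because `exp(2t) V₁(t)` has zero derivative.
-/

theorem mulVec_inv_mulVec {n R : Type*} [Fintype n] [DecidableEq n] [CommRing R]
    {A : Matrix n n R} (hA : IsUnit A) (y : n → R) : A *ᵥ (A⁻¹ *ᵥ y) = y := by
  rw [mulVec_mulVec, mul_nonsing_inv A ((isUnit_iff_isUnit_det A).1 hA), one_mulVec]

theorem dotProduct_mulVec_comm_of_isSymm {n R : Type*} [Fintype n] [NonUnitalCommSemiring R]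
    {A : Matrix n n R} (hA : A.IsSymm) (x y : n → R) : x ⬝ᵥ (A *ᵥ y) = y ⬝ᵥ (A *ᵥ x) := by
  rw [dotProduct_mulVec, ← mulVec_transpose, hA.eq, dotProduct_comm]

section Derivative

variable {𝕜 𝔸 m n : Type*} [NontriviallyNormedField 𝕜] [Fintype n] {t : 𝕜}

section NormedRing

variable [NormedRing 𝔸] [NormedAlgebra 𝕜 𝔸] {y : 𝕜 → n → 𝔸} {y' : n → 𝔸}

theorem hasDerivAt_dotProduct {x : 𝕜 → n → 𝔸} {x' : n → 𝔸}
    (hx : HasDerivAt x x' t) (hy : HasDerivAt y y' t) :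
    HasDerivAt (fun s => x s ⬝ᵥ y s) (x' ⬝ᵥ y t + x t ⬝ᵥ y') t :=
  (HasDerivAt.fun_sum fun i _ => (hasDerivAt_pi.1 hx i).fun_mul (hasDerivAt_pi.1 hy i)).congr_deriv
    Finset.sum_add_distrib

theorem hasDerivAt_mulVec [Finite m] {M : 𝕜 → Matrix m n 𝔸} {M' : Matrix m n 𝔸}
    (hM : ∀ i j, HasDerivAt (fun s => M s i j) (M' i j) t) (hy : HasDerivAt y y' t) :
    HasDerivAt (fun s => M s *ᵥ y s) (M' *ᵥ y t + M t *ᵥ y') t :=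
  have := Fintype.ofFinite m
  hasDerivAt_pi.2 fun i => hasDerivAt_dotProduct (hasDerivAt_pi.2 (hM i)) hy

end NormedRing

theorem hasDerivAt_dotProduct_mulVec_self_of_isSymm [NormedCommRing 𝔸] [NormedAlgebra 𝕜 𝔸]
    {M : 𝕜 → Matrix n n 𝔸} {M' : Matrix n n 𝔸} {x : 𝕜 → n → 𝔸} {x' : n → 𝔸}
    (hM : ∀ i j, HasDerivAt (fun s => M s i j) (M' i j) t) (hx : HasDerivAt x x' t)
    (hsymm : (M t).IsSymm) :
    HasDerivAt (fun s => x s ⬝ᵥ (M s *ᵥ x s))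
      (x t ⬝ᵥ (M' *ᵥ x t) + 2 * (x t ⬝ᵥ (M t *ᵥ x'))) t := by
  refine (hasDerivAt_dotProduct hx (hasDerivAt_mulVec hM hx)).congr_deriv ?_
  rw [dotProduct_mulVec_comm_of_isSymm hsymm x' (x t), dotProduct_add]
  ring

end Derivative

theorem eq_exp_smul_of_hasDerivAt_smul_self {E : Type*} [NormedAddCommGroup E] [NormedSpace ℝ E]
    {f : ℝ → E} {c : ℝ} (hf : ∀ t, HasDerivAt f (c • f t) t) (t : ℝ) :
    f t = Real.exp (c * t) • f 0 := by
  have hderiv (s : ℝ) : HasDerivAt (fun s => Real.exp (-c * s) • f s) 0 s := by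
    refine ((hasDerivAt_const_mul (-c)).exp.fun_smul (hf s)).congr_deriv ?_
    module
  have hconst : Real.exp (-c * t) • f t = f 0 := by
    simpa using is_const_of_deriv_eq_zero (fun s => (hderiv s).differentiableAt)
      (fun s => (hderiv s).deriv) t 0
  rw [← hconst, smul_smul, ← Real.exp_add, neg_mul, add_neg_cancel, Real.exp_zero, one_smul]

theorem statement1_general {ι : Type*} [Fintype ι] (M M' : ℝ → Matrix ι ι ℝ)
    (hMderiv : ∀ t i j, HasDerivAt (fun s => M s i j) (M' t i j) t)
    (hMsymm : ∀ t, (M t).IsSymm)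
    (q q' : ℝ → ι → ℝ) (hq : ∀ t, HasDerivAt q (q' t) t)
    (hclosed : ∀ t, M t *ᵥ q' t = -(M t *ᵥ q t) - (1 / 2 : ℝ) • (M' t *ᵥ q t)) :
    (∀ t, HasDerivAt (fun s => (1 / 2 : ℝ) * (q s ⬝ᵥ (M s *ᵥ q s)))
      (-2 * ((1 / 2 : ℝ) * (q t ⬝ᵥ (M t *ᵥ q t)))) t) ∧
    ∀ t, (1 / 2 : ℝ) * (q t ⬝ᵥ (M t *ᵥ q t))
      = (1 / 2 : ℝ) * (q 0 ⬝ᵥ (M 0 *ᵥ q 0)) * Real.exp (-2 * t) := by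
  have hV (t : ℝ) : HasDerivAt (fun s => (1 / 2 : ℝ) * (q s ⬝ᵥ (M s *ᵥ q s)))
      (-2 * ((1 / 2 : ℝ) * (q t ⬝ᵥ (M t *ᵥ q t)))) t := by
    refine ((hasDerivAt_dotProduct_mulVec_self_of_isSymm (hMderiv t) (hq t)
      (hMsymm t)).const_mul (1 / 2 : ℝ)).congr_deriv ?_
    rw [hclosed, dotProduct_sub, dotProduct_neg, dotProduct_smul, smul_eq_mul]
    ring
  exact ⟨hV, fun t => (eq_exp_smul_of_hasDerivAt_smul_self hV t).trans (mul_comm _ _)⟩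

/-- Under the closed-loop equation `q̃′ = −q̃ − (1/2) M⁻¹ M′ q̃`,
the function `V₁(t) = (1/2) q̃(t)ᵀ M(t) q̃(t)` satisfies `V₁′ = −2 V₁`, and
consequently `V₁(t) = V₁(0) · exp(−2t)` for all `t ≥ 0`. -/
theorem statement1 (n : ℕ) (hn : 1 ≤ n)
    (M M' : ℝ → Matrix (Fin n) (Fin n) ℝ)
    (hMderiv : ∀ t : ℝ, ∀ i j : Fin n, HasDerivAt (fun s => M s i j) (M' t i j) t)
    (hMsymm : ∀ t : ℝ, (M t).IsSymm)
    (hMpd : ∀ t : ℝ, (M t).PosDef)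
    (qtil qtil' : ℝ → Fin n → ℝ)
    (hq : ∀ t : ℝ, HasDerivAt qtil (qtil' t) t)
    (hclosed : ∀ t : ℝ, qtil' t = -qtil t - (1/2 : ℝ) • ((M t)⁻¹ *ᵥ (M' t *ᵥ qtil t))) :
    (∀ t : ℝ, HasDerivAt (fun s => (1/2 : ℝ) * (qtil s ⬝ᵥ (M s *ᵥ qtil s)))
      (-2 * ((1/2 : ℝ) * (qtil t ⬝ᵥ (M t *ᵥ qtil t)))) t) ∧
    (∀ t : ℝ, 0 ≤ t →
      (1/2 : ℝ) * (qtil t ⬝ᵥ (M t *ᵥ qtil t))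
        = (1/2 : ℝ) * (qtil 0 ⬝ᵥ (M 0 *ᵥ qtil 0)) * Real.exp (-2 * t)) := by
  have hMq (t : ℝ) : M t *ᵥ qtil' t = -(M t *ᵥ qtil t) - (1 / 2 : ℝ) • (M' t *ᵥ qtil t) := by
    rw [hclosed, mulVec_sub, mulVec_neg, mulVec_smul, mulVec_inv_mulVec (hMpd t).isUnit]
  exact (statement1_general M M' hMderiv hMsymm qtil qtil' hq hMq).imp_right fun hV t _ => hV t
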